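/- Let K ∈ ℝ, let b ∈ (0, π/√K] (with the convention π/√K = +∞ when K ≤ 0), and let ρ : (0,b) → ℝ be continuously differentiable with ρ'(t) + ρ(t)² ≥ −K for every t ∈ (0,b) and lim_{t→0⁺} (ρ(t) − 1/t) = 0. Then ρ(t) ≥ sn_K'(t)/sn_K(t) for every t ∈ (0,b). -/

import Mathlib

open Set Filter Topology

/-- The function `sn_K`: `sin(√K t)/√K` for `K > 0`, `t` for `K = 0`,
`sinh(√(-K) t)/√(-K)` for `K < 0`. -/
noncomputable def snk (K : ℝ) (t : ℝ) : ℝ :=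
  if 0 < K then Real.sin (Real.sqrt K * t) / Real.sqrt K
  else if K = 0 then t
  else Real.sinh (Real.sqrt (-K) * t) / Real.sqrt (-K)

/-!
If `σ' + σ² ≤ ρ' + ρ²`, then `w = σ - ρ` satisfies the linear inequality `w' ≤ -(σ + ρ) w`, so the
order `σ ≤ ρ` persists in time. The quotient `sn_K' / sn_K` is a solution of the autonomous equation
`σ' + σ² = -K`, hence so is each of its translates `t ↦ σ (t + ε)`. For `ε > 0` the translate is
finite at `0`, where `ρ` blows up, so it starts, and therefore stays, below `ρ`. Now let `ε → 0`.
-/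

section Comparison

variable {a b : ℝ}

theorem nonpos_of_deriv_right_le_mul {w w' : ℝ → ℝ} {L : ℝ} (hw : ContinuousOn w (Icc a b))
    (hw' : ∀ x ∈ Ico a b, HasDerivWithinAt w (w' x) (Ici x) x) (ha : w a ≤ 0)
    (bound : ∀ x ∈ Ico a b, 0 < w x → w' x ≤ L * w x) :
    ∀ ⦃x⦄, x ∈ Icc a b → w x ≤ 0 := by
  have barrier : ∀ ε > 0, ∀ ⦃x⦄, x ∈ Icc a b → w x ≤ ε * Real.exp ((L + 1) * x) := by
    intro ε hε
    have hB : ∀ x, HasDerivAt (fun x ↦ ε * Real.exp ((L + 1) * x))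
        (ε * (Real.exp ((L + 1) * x) * (L + 1))) x :=
      fun x ↦ (hasDerivAt_const_mul (L + 1)).exp.const_mul ε
    refine image_le_of_deriv_right_lt_deriv_boundary hw hw' (ha.trans (by positivity)) hB ?_
    intro x hx hxB
    have hpos : 0 < w x := hxB ▸ by positivity
    calc w' x ≤ L * w x := bound x hx hpos
      _ < (L + 1) * w x := by linarith
      _ = ε * (Real.exp ((L + 1) * x) * (L + 1)) := by rw [hxB]; ring
  intro x hx
  refine le_of_forall_pos_le_add fun δ hδ ↦ ?_
  have := barrier (δ / Real.exp ((L + 1) * x)) (by positivity) hx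
  rwa [div_mul_cancel₀ _ (Real.exp_ne_zero _), ← zero_add δ] at this

variable {σ σ' ρ ρ' : ℝ → ℝ}

theorem le_of_deriv_right_add_sq_le
    (hσ : ContinuousOn σ (Icc a b)) (hσ' : ∀ x ∈ Ico a b, HasDerivWithinAt σ (σ' x) (Ici x) x)
    (hρ : ContinuousOn ρ (Icc a b)) (hρ' : ∀ x ∈ Ico a b, HasDerivWithinAt ρ (ρ' x) (Ici x) x)
    (ha : σ a ≤ ρ a) (bound : ∀ x ∈ Ico a b, σ' x + σ x ^ 2 ≤ ρ' x + ρ x ^ 2) :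
    ∀ ⦃x⦄, x ∈ Icc a b → σ x ≤ ρ x := by
  obtain ⟨L, hL⟩ := isCompact_Icc.bddAbove_image (hσ.add hρ).neg
  have hL : ∀ x ∈ Icc a b, -(σ x + ρ x) ≤ L := fun x hx ↦ hL (mem_image_of_mem _ hx)
  have hw := nonpos_of_deriv_right_le_mul (L := L) (hσ.sub hρ)
    (fun x hx ↦ (hσ' x hx).sub (hρ' x hx)) (sub_nonpos.2 ha) fun x hx hpos ↦
      calc σ' x - ρ' x ≤ -(σ x + ρ x) * (σ x - ρ x) := by linarith [bound x hx]
        _ ≤ L * (σ x - ρ x) :=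
          mul_le_mul_of_nonneg_right (hL x (Ico_subset_Icc_self hx)) hpos.le
  exact fun x hx ↦ sub_nonpos.1 (hw hx)

theorem le_of_deriv_add_sq_le_of_frequently_le
    (hσ : ∀ t ∈ Ioo a b, HasDerivAt σ (σ' t) t) (hρ : ∀ t ∈ Ioo a b, HasDerivAt ρ (ρ' t) t)
    (bound : ∀ t ∈ Ioo a b, σ' t + σ t ^ 2 ≤ ρ' t + ρ t ^ 2)
    (hle : ∃ᶠ t in 𝓝[>] a, σ t ≤ ρ t) :
    ∀ t ∈ Ioo a b, σ t ≤ ρ t := by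
  intro t ht
  obtain ⟨x, hx, hax, hxt⟩ := (hle.and_eventually (Ioo_mem_nhdsGT ht.1)).exists
  have hsub : Icc x t ⊆ Ioo a b := Icc_subset_Ioo hax ht.2
  have hsub' : Ico x t ⊆ Ioo a b := Ico_subset_Icc_self.trans hsub
  exact le_of_deriv_right_add_sq_le
    (HasDerivAt.continuousOn fun y hy ↦ hσ y (hsub hy))
    (fun y hy ↦ (hσ y (hsub' hy)).hasDerivWithinAt)
    (HasDerivAt.continuousOn fun y hy ↦ hρ y (hsub hy))
    (fun y hy ↦ (hρ y (hsub' hy)).hasDerivWithinAt)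
    hx (fun y hy ↦ bound y (hsub' hy)) (right_mem_Icc.2 hxt.le)

theorem le_of_deriv_add_sq_le_of_tendsto_atTop {κ : ℝ}
    (hσ : ∀ t ∈ Ioo a b, HasDerivAt σ (σ' t) t) (hρ : ∀ t ∈ Ioo a b, HasDerivAt ρ (ρ' t) t)
    (hσκ : ∀ t ∈ Ioo a b, σ' t + σ t ^ 2 ≤ κ) (hκρ : ∀ t ∈ Ioo a b, κ ≤ ρ' t + ρ t ^ 2)
    (hlim : Tendsto ρ (𝓝[>] a) atTop) :
    ∀ t ∈ Ioo a b, σ t ≤ ρ t := by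
  intro t ht
  have translate_le : ∀ ε ∈ Ioo 0 (b - t), σ (t + ε) ≤ ρ t := by
    rintro ε ⟨hε, hεb⟩
    have hmem : ∀ x ∈ Ico a (b - ε), x + ε ∈ Ioo a b := fun x hx ↦
      ⟨by linarith [hx.1], by linarith [hx.2]⟩
    have hderiv : ∀ x ∈ Ico a (b - ε), HasDerivAt (fun x ↦ σ (x + ε)) (σ' (x + ε)) x :=
      fun x hx ↦ (hσ _ (hmem x hx)).comp_add_const x ε
    have hIoo : Ioo a (b - ε) ⊆ Ioo a b := Ioo_subset_Ioo_right (by linarith)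
    have hstart : ∀ᶠ x in 𝓝[>] a, σ (x + ε) ≤ ρ x := by
      have hcont : Tendsto (fun x ↦ σ (x + ε)) (𝓝[>] a) (𝓝 (σ (a + ε))) :=
        (hderiv a ⟨le_rfl, by linarith [ht.1]⟩).continuousAt.tendsto.mono_left nhdsWithin_le_nhds
      filter_upwards [hcont.eventually_le_const (lt_add_one _), hlim.eventually_ge_atTop _]
        with x hxσ hxρ using hxσ.trans hxρ
    exact le_of_deriv_add_sq_le_of_frequently_le
      (fun x hx ↦ hderiv x (Ioo_subset_Ico_self hx)) (fun x hx ↦ hρ x (hIoo hx))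
      (fun x hx ↦ (hσκ _ (hmem x (Ioo_subset_Ico_self hx))).trans (hκρ x (hIoo hx)))
      hstart.frequently t ⟨ht.1, by linarith⟩
  have hcont : Tendsto (fun ε ↦ σ (t + ε)) (𝓝[>] 0) (𝓝 (σ t)) := by
    have hσt : ContinuousAt σ (t + 0) := by simpa using (hσ t ht).continuousAt
    simpa [Function.comp_def] using
      (hσt.comp (continuous_const_add t).continuousAt).tendsto.mono_left
        (nhdsWithin_le_nhds (s := Ioi 0))
  refine le_of_tendsto hcont ?_
  filter_upwards [Ioo_mem_nhdsGT (sub_pos.2 ht.2)] using translate_le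

end Comparison

/-- The generalized cosine `cs_K = sn_K'`; the branch `K ≤ 0` gives `cosh 0 = 1` at `K = 0`. -/
noncomputable def csk (K t : ℝ) : ℝ :=
  if 0 < K then Real.cos (Real.sqrt K * t) else Real.cosh (Real.sqrt (-K) * t)

/-- The generalized cotangent `ct_K = sn_K' / sn_K`, the model solution of `σ' + σ² = -K`. -/
noncomputable def ctk (K t : ℝ) : ℝ :=
  csk K t / snk K t

section Model

variable {K t : ℝ}

theorem snk_of_pos (hK : 0 < K) : snk K = fun t ↦ Real.sin (Real.sqrt K * t) / Real.sqrt K := by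
  funext t
  simp [snk, hK]

theorem snk_zero : snk 0 = id := by
  funext t
  simp [snk]

theorem snk_of_neg (hK : K < 0) :
    snk K = fun t ↦ Real.sinh (Real.sqrt (-K) * t) / Real.sqrt (-K) := by
  funext t
  simp [snk, hK.ne, hK.not_gt]

theorem csk_of_pos (hK : 0 < K) : csk K = fun t ↦ Real.cos (Real.sqrt K * t) := by
  funext t
  simp [csk, hK]

theorem csk_zero : csk 0 = 1 := by
  funext t
  simp [csk]

theorem csk_of_neg (hK : K < 0) : csk K = fun t ↦ Real.cosh (Real.sqrt (-K) * t) := by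
  funext t
  simp [csk, hK.not_gt]

theorem hasDerivAt_snk (K t : ℝ) : HasDerivAt (snk K) (csk K t) t := by
  rcases lt_trichotomy K 0 with hK | rfl | hK
  · have hk : Real.sqrt (-K) ≠ 0 := (Real.sqrt_pos.2 (neg_pos.2 hK)).ne'
    rw [snk_of_neg hK, csk_of_neg hK]
    simpa [hk] using
      (hasDerivAt_const_mul (x := t) (Real.sqrt (-K))).sinh.div_const (Real.sqrt (-K))
  · rw [snk_zero, csk_zero]
    exact hasDerivAt_id t
  · have hk : Real.sqrt K ≠ 0 := (Real.sqrt_pos.2 hK).ne'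
    rw [snk_of_pos hK, csk_of_pos hK]
    simpa [hk] using (hasDerivAt_const_mul (x := t) (Real.sqrt K)).sin.div_const (Real.sqrt K)

theorem hasDerivAt_csk (K t : ℝ) : HasDerivAt (csk K) (-K * snk K t) t := by
  rcases lt_trichotomy K 0 with hK | rfl | hK
  · have hk : -K / Real.sqrt (-K) = Real.sqrt (-K) := Real.div_sqrt
    rw [snk_of_neg hK, csk_of_neg hK]
    refine (hasDerivAt_const_mul (Real.sqrt (-K))).cosh.congr_deriv ?_
    rw [mul_div_left_comm, hk]
  · rw [csk_zero, neg_zero, zero_mul]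
    exact hasDerivAt_const t 1
  · have hk : K / Real.sqrt K = Real.sqrt K := Real.div_sqrt
    rw [snk_of_pos hK, csk_of_pos hK]
    refine (hasDerivAt_const_mul (Real.sqrt K)).cos.congr_deriv ?_
    rw [mul_div_left_comm, neg_div, hk, mul_neg, neg_mul]

theorem snk_pos (ht : 0 < t) (htK : 0 < K → t < Real.pi / Real.sqrt K) : 0 < snk K t := by
  rcases lt_trichotomy K 0 with hK | rfl | hK
  · have hk : 0 < Real.sqrt (-K) := Real.sqrt_pos.2 (neg_pos.2 hK)
    rw [snk_of_neg hK]
    exact div_pos (Real.sinh_pos_iff.2 (mul_pos hk ht)) hk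
  · rwa [snk_zero]
  · have hk : 0 < Real.sqrt K := Real.sqrt_pos.2 hK
    rw [snk_of_pos hK]
    exact div_pos (Real.sin_pos_of_pos_of_lt_pi (mul_pos hk ht) ((lt_div_iff₀' hk).1 (htK hK))) hk

theorem hasDerivAt_ctk (h : snk K t ≠ 0) : HasDerivAt (ctk K) (-K - ctk K t ^ 2) t := by
  refine ((hasDerivAt_csk K t).div (hasDerivAt_snk K t) h).congr_deriv ?_
  rw [ctk]
  field_simp

theorem deriv_snk_div_snk (K t : ℝ) : deriv (snk K) t / snk K t = ctk K t := by
  rw [(hasDerivAt_snk K t).deriv, ctk]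

end Model

theorem riccati_lower_comparison_snk_general
    (K b : ℝ) (hbK : 0 < K → b ≤ Real.pi / Real.sqrt K)
    (ρ ρ' : ℝ → ℝ)
    (hd : ∀ t ∈ Ioo (0 : ℝ) b, HasDerivAt ρ (ρ' t) t)
    (hineq : ∀ t ∈ Ioo (0 : ℝ) b, -K ≤ ρ' t + (ρ t) ^ 2)
    (hlim : Tendsto ρ (𝓝[>] (0 : ℝ)) atTop) :
    ∀ t ∈ Ioo (0 : ℝ) b, deriv (snk K) t / snk K t ≤ ρ t := by
  have hct : ∀ t ∈ Ioo (0 : ℝ) b, HasDerivAt (ctk K) (-K - ctk K t ^ 2) t := fun t ht ↦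
    hasDerivAt_ctk (snk_pos ht.1 fun hK ↦ ht.2.trans_le (hbK hK)).ne'
  simp only [deriv_snk_div_snk]
  exact le_of_deriv_add_sq_le_of_tendsto_atTop hct hd (fun t _ ↦ (sub_add_cancel _ _).le) hineq hlim

/-- **Comparison with the model logarithmic derivative, upper curvature bound.**
Let `K ∈ ℝ` and `b ∈ (0, π/√K]` (with the convention `π/√K = +∞` for `K ≤ 0`).
If `ρ : (0,b) → ℝ` is `C¹`, satisfies `ρ' + ρ² ≥ -K` on `(0,b)` and
`ρ(t) - 1/t → 0` as `t → 0⁺`, then `ρ(t) ≥ sn_K'(t)/sn_K(t)` on `(0,b)`. -/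
theorem riccati_lower_comparison_snk
    (K b : ℝ) (hb : 0 < b) (hbK : 0 < K → b ≤ Real.pi / Real.sqrt K)
    (ρ ρ' : ℝ → ℝ)
    (hd : ∀ t ∈ Ioo (0:ℝ) b, HasDerivAt ρ (ρ' t) t)
    (hc : ContinuousOn ρ' (Ioo (0:ℝ) b))
    (hineq : ∀ t ∈ Ioo (0:ℝ) b, -K ≤ ρ' t + (ρ t) ^ 2)
    (hlim : Tendsto (fun t => ρ t - 1 / t) (𝓝[>] (0:ℝ)) (𝓝 0)) :
    ∀ t ∈ Ioo (0:ℝ) b, deriv (snk K) t / snk K t ≤ ρ t := by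
  exact riccati_lower_comparison_snk_general K b hbK ρ ρ' hd hineq <| by
    simpa using hlim.add_atTop tendsto_inv_nhdsGT_zero
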